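/- Assume there exists Cas ∈ ℝ such that A(X,Y) = Cas·B(X,Y) for all X,Y ∈ 𝔪 (the Casimir operator of the isotropy representation is a scalar). Then for every α ∈ ℝ and all X,Y ∈ 𝔪, the Ricci tensor satisfies Ric^α(X,Y) = (Scal^α / n)·B(X,Y); that is, the space is ∇^α-Einstein for every α ∈ ℝ. -/

import Mathlib

/-!
Write `c = (1 - α) / 2`. Since `[Zᵢ, Zᵢ] = 0` and `B` is `ad`-invariant with `𝔨 ⊥ 𝔪`, the
curvature terms pair with `Y` to give (`ricB_eq`)
`Ric^α(X, Y) = (c - c²) P(X, Y) + A(X, Y)`, where `P(X, Y) = Σᵢ B([X, Zᵢ]_𝔪, [Y, Zᵢ]_𝔪)`.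

The form `P` is determined by `A`, because `P + 2 A = B` on `𝔪` (`negKilling_eq`). To see this, split
`B(X, Y) = -tr(ad X ∘ ad Y)` along `1 = p𝔪 + p𝔨`. The `𝔪`-part is `P + A` by invariance. As
`ad Y` maps `𝔨` into `𝔪`, cyclicity of the trace turns the `𝔨`-part into
`-tr(p𝔪 ∘ ad Y ∘ p𝔨 ∘ ad X)`, which is `A`. Both traces are evaluated in the basis `Z` of `𝔪`
(`trace_proj_comp`), so no basis of `𝔨` is needed.

If `A = Cas · B`, then `P = (1 - 2 Cas) B`, hence `Ric^α` is a multiple of `B`; summing over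
`X = Y = Zᵢ` identifies the factor as `Scal^α / n`.
-/

open scoped BigOperators

/-- The Nomizu map `Λ^α(X)Y := ((1−α)/2)·[X,Y]_𝔪`. -/
noncomputable def LamR (𝔤 : Type*) [LieRing 𝔤] [LieAlgebra ℝ 𝔤]
    (p𝔪 : 𝔤 →ₗ[ℝ] 𝔤) (α : ℝ) (X Y : 𝔤) : 𝔤 :=
  ((1 - α) / 2) • p𝔪 ⁅X, Y⁆

/-- The curvature
`R^α(X,Y)Z := Λ^α(X)(Λ^α(Y)Z) − Λ^α(Y)(Λ^α(X)Z) − Λ^α([X,Y]_𝔪)Z − [[X,Y]_𝔨, Z]`. -/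
noncomputable def CurvR (𝔤 : Type*) [LieRing 𝔤] [LieAlgebra ℝ 𝔤]
    (p𝔨 p𝔪 : 𝔤 →ₗ[ℝ] 𝔤) (α : ℝ) (X Y Z : 𝔤) : 𝔤 :=
  LamR 𝔤 p𝔪 α X (LamR 𝔤 p𝔪 α Y Z) - LamR 𝔤 p𝔪 α Y (LamR 𝔤 p𝔪 α X Z)
    - LamR 𝔤 p𝔪 α (p𝔪 ⁅X, Y⁆) Z - ⁅p𝔨 ⁅X, Y⁆, Z⁆

/-- The negative of the Killing form, `B := −κ`. -/
noncomputable def NegKilling (𝔤 : Type*) [LieRing 𝔤] [LieAlgebra ℝ 𝔤] (X Y : 𝔤) : ℝ :=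
  - killingForm ℝ 𝔤 X Y

/-- The Ricci tensor `Ric^α(X,Y) := Σᵢ B(R^α(X,Zᵢ)Zᵢ, Y)`. -/
noncomputable def RicB (𝔤 : Type*) [LieRing 𝔤] [LieAlgebra ℝ 𝔤]
    (p𝔨 p𝔪 : 𝔤 →ₗ[ℝ] 𝔤) (α : ℝ) {n : ℕ} (Z : Fin n → 𝔤) (X Y : 𝔤) : ℝ :=
  ∑ i, NegKilling 𝔤 (CurvR 𝔤 p𝔨 p𝔪 α X (Z i) (Z i)) Y

/-- The scalar curvature `Scal^α := Σᵢ Ric^α(Zᵢ,Zᵢ)`. -/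
noncomputable def ScalB (𝔤 : Type*) [LieRing 𝔤] [LieAlgebra ℝ 𝔤]
    (p𝔨 p𝔪 : 𝔤 →ₗ[ℝ] 𝔤) (α : ℝ) {n : ℕ} (Z : Fin n → 𝔤) : ℝ :=
  ∑ i, RicB 𝔤 p𝔨 p𝔪 α Z (Z i) (Z i)

section Aux

variable {𝔤 : Type*} [LieRing 𝔤] [LieAlgebra ℝ 𝔤]

lemma negKilling_comm (X Y : 𝔤) : NegKilling 𝔤 X Y = NegKilling 𝔤 Y X := by
  simp only [NegKilling, killingForm]
  rw [LieModule.traceForm_comm]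

lemma negKilling_add_left (X Y V : 𝔤) :
    NegKilling 𝔤 (X + Y) V = NegKilling 𝔤 X V + NegKilling 𝔤 Y V := by
  simp only [NegKilling, map_add, LinearMap.add_apply]; ring

lemma negKilling_sub_left (X Y V : 𝔤) :
    NegKilling 𝔤 (X - Y) V = NegKilling 𝔤 X V - NegKilling 𝔤 Y V := by
  simp only [NegKilling, map_sub, LinearMap.sub_apply]; ring

lemma negKilling_smul_left (a : ℝ) (X V : 𝔤) :
    NegKilling 𝔤 (a • X) V = a * NegKilling 𝔤 X V := by
  simp [NegKilling]

lemma negKilling_neg_right (X V : 𝔤) : NegKilling 𝔤 X (-V) = -NegKilling 𝔤 X V := by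
  simp [NegKilling]

lemma negKilling_lie (X Y V : 𝔤) : NegKilling 𝔤 ⁅X, Y⁆ V = NegKilling 𝔤 X ⁅Y, V⁆ := by
  simp only [NegKilling, killingForm]
  rw [LieModule.traceForm_apply_lie_apply]

/-- `ad V` is skew-symmetric for `B`. -/
lemma negKilling_lie_skew (V X Y : 𝔤) : NegKilling 𝔤 ⁅V, X⁆ Y = -NegKilling 𝔤 X ⁅V, Y⁆ := by
  rw [← lie_skew, ← neg_one_smul ℝ, negKilling_smul_left, negKilling_lie]; ring

variable {𝔨 𝔪 : Submodule ℝ 𝔤} {p𝔨 p𝔪 : 𝔤 →ₗ[ℝ] 𝔤}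

/-- Membership of the components and `p𝔨 + p𝔪 = 1` already make each map the identity on its own
summand, because the sum is direct. -/
lemma proj_apply (hcompl : IsCompl 𝔨 𝔪)
    (hp𝔨mem : ∀ X : 𝔤, p𝔨 X ∈ 𝔨) (hp𝔪mem : ∀ X : 𝔤, p𝔪 X ∈ 𝔪)
    (hpsum : ∀ X : 𝔤, p𝔨 X + p𝔪 X = X) :
    (∀ X ∈ 𝔨, p𝔨 X = X) ∧ (∀ X ∈ 𝔪, p𝔪 X = X) := by
  constructor
  · intro X hX
    have h1 : p𝔪 X ∈ 𝔨 := by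
      have : p𝔪 X = X - p𝔨 X := eq_sub_of_add_eq' (hpsum X)
      rw [this]; exact sub_mem hX (hp𝔨mem X)
    have h0 : p𝔪 X = 0 := Submodule.disjoint_def.1 hcompl.disjoint _ h1 (hp𝔪mem X)
    simpa [h0] using hpsum X
  · intro X hX
    have h1 : p𝔨 X ∈ 𝔪 := by
      have : p𝔨 X = X - p𝔪 X := eq_sub_of_add_eq (hpsum X)
      rw [this]; exact sub_mem hX (hp𝔪mem X)
    have h0 : p𝔨 X = 0 := Submodule.disjoint_def.1 hcompl.disjoint _ (hp𝔨mem X) h1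
    simpa [h0] using hpsum X

lemma negKilling_proj_left
    (horth : ∀ X ∈ 𝔨, ∀ Y ∈ 𝔪, NegKilling 𝔤 X Y = 0)
    (hp𝔨mem : ∀ X : 𝔤, p𝔨 X ∈ 𝔨) (hpsum : ∀ X : 𝔤, p𝔨 X + p𝔪 X = X)
    (V : 𝔤) {Y : 𝔤} (hY : Y ∈ 𝔪) : NegKilling 𝔤 (p𝔪 V) Y = NegKilling 𝔤 V Y := by
  conv_rhs => rw [← hpsum V, negKilling_add_left, horth _ (hp𝔨mem V) _ hY, zero_add]

/-- Pairing a vector of `𝔪` with `V` only sees the `𝔪`-component of `V`. -/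
lemma negKilling_proj_m
    (horth : ∀ X ∈ 𝔨, ∀ Y ∈ 𝔪, NegKilling 𝔤 X Y = 0)
    (hp𝔨mem : ∀ X : 𝔤, p𝔨 X ∈ 𝔨) (hpsum : ∀ X : 𝔤, p𝔨 X + p𝔪 X = X)
    {Y : 𝔤} (hY : Y ∈ 𝔪) (V : 𝔤) : NegKilling 𝔤 Y V = NegKilling 𝔤 Y (p𝔪 V) := by
  rw [negKilling_comm Y, negKilling_comm Y, negKilling_proj_left horth hp𝔨mem hpsum V hY]

/-- Pairing a vector of `𝔨` with `V` only sees the `𝔨`-component of `V`. -/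
lemma negKilling_proj_k
    (horth : ∀ X ∈ 𝔨, ∀ Y ∈ 𝔪, NegKilling 𝔤 X Y = 0)
    (hp𝔪mem : ∀ X : 𝔤, p𝔪 X ∈ 𝔪) (hpsum : ∀ X : 𝔤, p𝔨 X + p𝔪 X = X)
    {Y : 𝔤} (hY : Y ∈ 𝔨) (V : 𝔤) : NegKilling 𝔤 Y V = NegKilling 𝔤 Y (p𝔨 V) := by
  conv_lhs => rw [← hpsum V, negKilling_comm, negKilling_add_left, negKilling_comm (p𝔪 V),
    horth _ hY _ (hp𝔪mem V), add_zero, negKilling_comm]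

variable {n : ℕ} {Z : Fin n → 𝔤}

/-- Expansion of the `𝔪`-component in the orthonormal basis `Z`. -/
lemma proj_eq_sum
    (horth : ∀ X ∈ 𝔨, ∀ Y ∈ 𝔪, NegKilling 𝔤 X Y = 0)
    (hp𝔨mem : ∀ X : 𝔤, p𝔨 X ∈ 𝔨) (hp𝔪mem : ∀ X : 𝔤, p𝔪 X ∈ 𝔪)
    (hpsum : ∀ X : 𝔤, p𝔨 X + p𝔪 X = X)
    (hZmem : ∀ i, Z i ∈ 𝔪)
    (hZon : ∀ i j, NegKilling 𝔤 (Z i) (Z j) = if i = j then 1 else 0)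
    (hZspan : Submodule.span ℝ (Set.range Z) = 𝔪) (V : 𝔤) :
    p𝔪 V = ∑ i, NegKilling 𝔤 V (Z i) • Z i := by
  have key : ∀ W ∈ Submodule.span ℝ (Set.range Z), W = ∑ i, NegKilling 𝔤 W (Z i) • Z i := by
    intro W hW
    induction hW using Submodule.span_induction with
    | mem x hx =>
      obtain ⟨j, rfl⟩ := hx
      simp [hZon]
    | zero => simp [NegKilling]
    | add x y _ _ hx hy =>
      simp only [negKilling_add_left, add_smul, Finset.sum_add_distrib]
      rw [← hx, ← hy]
    | smul a x _ hx =>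
      simp only [negKilling_smul_left, mul_smul]
      rw [← Finset.smul_sum, ← hx]
  rw [key (p𝔪 V) (hZspan ▸ hp𝔪mem V)]
  simp only [negKilling_proj_left horth hp𝔨mem hpsum V (hZmem _)]

/-- For an arbitrary endomorphism `T` of `𝔤`, the trace of `p𝔪 ∘ T` is computed in the basis `Z`
of `𝔪`, since `p𝔪 ∘ T` is a sum of the rank-one maps `V ↦ B(T V, Zᵢ) Zᵢ`. -/
lemma trace_proj_comp [FiniteDimensional ℝ 𝔤]
    (hexp : ∀ V, p𝔪 V = ∑ i, NegKilling 𝔤 V (Z i) • Z i) (T : 𝔤 →ₗ[ℝ] 𝔤) :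
    LinearMap.trace ℝ 𝔤 (p𝔪 ∘ₗ T) = ∑ i, NegKilling 𝔤 (T (Z i)) (Z i) := by
  have h : p𝔪 ∘ₗ T =
      ∑ i, ((-(killingForm ℝ 𝔤 (Z i))) ∘ₗ T).smulRight (Z i) := by
    ext V
    simp only [LinearMap.comp_apply, hexp, LinearMap.sum_apply, LinearMap.smulRight_apply,
      LinearMap.neg_apply]
    exact Finset.sum_congr rfl fun i _ => by rw [negKilling_comm]; rfl
  rw [h, map_sum]
  refine Finset.sum_congr rfl fun i _ => ?_
  rw [LinearMap.trace_smulRight, negKilling_comm]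
  rfl

/-- The identity `B = P + 2 A` on `𝔪`. -/
lemma negKilling_eq [FiniteDimensional ℝ 𝔤]
    (horth : ∀ X ∈ 𝔨, ∀ Y ∈ 𝔪, NegKilling 𝔤 X Y = 0)
    (h𝔨𝔪 : ∀ X ∈ 𝔨, ∀ Y ∈ 𝔪, ⁅X, Y⁆ ∈ 𝔪)
    (hp𝔨mem : ∀ X : 𝔤, p𝔨 X ∈ 𝔨) (hp𝔪mem : ∀ X : 𝔤, p𝔪 X ∈ 𝔪)
    (hpsum : ∀ X : 𝔤, p𝔨 X + p𝔪 X = X)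
    (hk : ∀ X ∈ 𝔨, p𝔨 X = X) (hm : ∀ X ∈ 𝔪, p𝔪 X = X)
    (hexp : ∀ V, p𝔪 V = ∑ i, NegKilling 𝔤 V (Z i) • Z i)
    (X Y : 𝔤) (hY : Y ∈ 𝔪) :
    NegKilling 𝔤 X Y = ∑ i, NegKilling 𝔤 (p𝔪 ⁅X, Z i⁆) (p𝔪 ⁅Y, Z i⁆)
      + 2 * ∑ i, NegKilling 𝔤 (p𝔨 ⁅X, Z i⁆) (p𝔨 ⁅Y, Z i⁆) := by
  set a := LieAlgebra.ad ℝ 𝔤 X with ha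
  set b := LieAlgebra.ad ℝ 𝔤 Y with hb
  have hid : p𝔪 ∘ₗ (a ∘ₗ b) + p𝔨 ∘ₗ (a ∘ₗ b) = a ∘ₗ b := by
    ext V
    simp only [LinearMap.add_apply, LinearMap.comp_apply]
    rw [add_comm, hpsum]
  have hkk : p𝔨 ∘ₗ p𝔨 = p𝔨 := by ext V; exact hk _ (hp𝔨mem V)
  have hbk : p𝔪 ∘ₗ (b ∘ₗ p𝔨) = b ∘ₗ p𝔨 := by
    ext V
    simp only [LinearMap.comp_apply]
    refine hm _ ?_
    rw [hb, LieAlgebra.ad_apply, ← lie_skew]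
    exact neg_mem (h𝔨𝔪 _ (hp𝔨mem V) _ hY)
  have hcyc : LinearMap.trace ℝ 𝔤 (p𝔨 ∘ₗ (a ∘ₗ b))
      = LinearMap.trace ℝ 𝔤 (p𝔪 ∘ₗ (b ∘ₗ (p𝔨 ∘ₗ a))) := by
    calc LinearMap.trace ℝ 𝔤 (p𝔨 ∘ₗ (a ∘ₗ b))
        = LinearMap.trace ℝ 𝔤 ((p𝔨 ∘ₗ a) ∘ₗ b) := by rw [LinearMap.comp_assoc]
      _ = LinearMap.trace ℝ 𝔤 (b ∘ₗ (p𝔨 ∘ₗ a)) := LinearMap.trace_comp_comm' _ _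
      _ = LinearMap.trace ℝ 𝔤 ((b ∘ₗ p𝔨) ∘ₗ a) := by rw [LinearMap.comp_assoc]
      _ = LinearMap.trace ℝ 𝔤 ((p𝔪 ∘ₗ (b ∘ₗ p𝔨)) ∘ₗ a) := by rw [hbk]
      _ = LinearMap.trace ℝ 𝔤 (p𝔪 ∘ₗ (b ∘ₗ (p𝔨 ∘ₗ a))) := by simp only [LinearMap.comp_assoc]
  have htr : NegKilling 𝔤 X Y = -LinearMap.trace ℝ 𝔤 (a ∘ₗ b) := by
    rw [NegKilling, killingForm_apply_apply]
  rw [htr, ← hid, map_add, hcyc, trace_proj_comp hexp, trace_proj_comp hexp, neg_add, two_mul,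
    ← add_assoc, ← Finset.sum_add_distrib, ← Finset.sum_neg_distrib, ← Finset.sum_neg_distrib]
  congr 1
  · refine Finset.sum_congr rfl fun i _ => ?_
    have h1 : NegKilling 𝔤 ((a ∘ₗ b) (Z i)) (Z i) = -NegKilling 𝔤 ⁅X, Z i⁆ ⁅Y, Z i⁆ := by
      rw [LinearMap.comp_apply, ha, hb, LieAlgebra.ad_apply, LieAlgebra.ad_apply,
        negKilling_lie_skew, negKilling_comm]
    rw [h1, neg_neg]
    conv_lhs => rw [← hpsum ⁅X, Z i⁆]
    rw [negKilling_add_left, negKilling_proj_k horth hp𝔪mem hpsum (hp𝔨mem _),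
      negKilling_proj_m horth hp𝔨mem hpsum (hp𝔪mem _), add_comm]
  · refine Finset.sum_congr rfl fun i _ => ?_
    rw [LinearMap.comp_apply, LinearMap.comp_apply, ha, hb, LieAlgebra.ad_apply,
      LieAlgebra.ad_apply, negKilling_lie_skew, neg_neg,
      ← negKilling_proj_k horth hp𝔪mem hpsum (hp𝔨mem _)]

/-- The formula `Ric^α = (c - c²) P + A` with `c = (1 - α) / 2`. -/
lemma ricB_eq
    (horth : ∀ X ∈ 𝔨, ∀ Y ∈ 𝔪, NegKilling 𝔤 X Y = 0)
    (hp𝔨mem : ∀ X : 𝔤, p𝔨 X ∈ 𝔨) (hp𝔪mem : ∀ X : 𝔤, p𝔪 X ∈ 𝔪)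
    (hpsum : ∀ X : 𝔤, p𝔨 X + p𝔪 X = X)
    (α : ℝ) (X Y : 𝔤) (hY : Y ∈ 𝔪) :
    RicB 𝔤 p𝔨 p𝔪 α Z X Y = ((1 - α) / 2 - ((1 - α) / 2) ^ 2)
        * ∑ i, NegKilling 𝔤 (p𝔪 ⁅X, Z i⁆) (p𝔪 ⁅Y, Z i⁆)
      + ∑ i, NegKilling 𝔤 (p𝔨 ⁅X, Z i⁆) (p𝔨 ⁅Y, Z i⁆) := by
  rw [RicB, Finset.mul_sum, ← Finset.sum_add_distrib]
  refine Finset.sum_congr rfl fun i _ => ?_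
  have h1 : NegKilling 𝔤 ⁅p𝔪 ⁅X, Z i⁆, Z i⁆ Y = -NegKilling 𝔤 (p𝔪 ⁅X, Z i⁆) (p𝔪 ⁅Y, Z i⁆) := by
    rw [negKilling_lie, ← lie_skew (Z i) Y, negKilling_neg_right,
      ← negKilling_proj_m horth hp𝔨mem hpsum (hp𝔪mem _)]
  have h2 : NegKilling 𝔤 ⁅p𝔨 ⁅X, Z i⁆, Z i⁆ Y = -NegKilling 𝔤 (p𝔨 ⁅X, Z i⁆) (p𝔨 ⁅Y, Z i⁆) := by
    rw [negKilling_lie, ← lie_skew (Z i) Y, negKilling_neg_right,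
      ← negKilling_proj_k horth hp𝔪mem hpsum (hp𝔨mem _)]
  have h3 : NegKilling 𝔤 ⁅Z i, p𝔪 ⁅X, Z i⁆⁆ Y = NegKilling 𝔤 (p𝔪 ⁅X, Z i⁆) (p𝔪 ⁅Y, Z i⁆) := by
    rw [← lie_skew, ← neg_one_smul ℝ, negKilling_smul_left, h1]; ring
  simp only [CurvR, LamR, lie_self, map_zero, smul_zero, lie_zero, lie_smul, map_smul, zero_sub,
    negKilling_sub_left, negKilling_smul_left, h2]
  rw [← neg_one_smul ℝ]
  simp only [negKilling_smul_left, negKilling_proj_left horth hp𝔨mem hpsum _ hY, h1, h3]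
  ring

end Aux

/-- Suppose the Killing form of `𝔤` is negative definite, `𝔤 = 𝔨 ⊕ 𝔪` is a
`B`-orthogonal reductive decomposition, and the Casimir operator of the isotropy
representation is a scalar: `A(X,Y) = Cas·B(X,Y)` on `𝔪`.  Then for every `α ∈ ℝ` the
Ricci tensor satisfies `Ric^α(X,Y) = (Scal^α/n)·B(X,Y)` on `𝔪`: the space is
`∇^α`-Einstein for every `α`. -/
theorem stmt_12 (𝔤 : Type*) [LieRing 𝔤] [LieAlgebra ℝ 𝔤] [FiniteDimensional ℝ 𝔤]
    (hκ : ∀ X : 𝔤, X ≠ 0 → killingForm ℝ 𝔤 X X < 0)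
    (𝔨 𝔪 : Submodule ℝ 𝔤)
    (h𝔨 : ∀ X ∈ 𝔨, ∀ Y ∈ 𝔨, ⁅X, Y⁆ ∈ 𝔨)
    (hcompl : IsCompl 𝔨 𝔪)
    (horth : ∀ X ∈ 𝔨, ∀ Y ∈ 𝔪, killingForm ℝ 𝔤 X Y = 0)
    (h𝔨𝔪 : ∀ X ∈ 𝔨, ∀ Y ∈ 𝔪, ⁅X, Y⁆ ∈ 𝔪)
    (p𝔨 p𝔪 : 𝔤 →ₗ[ℝ] 𝔤)
    (hp𝔨mem : ∀ X : 𝔤, p𝔨 X ∈ 𝔨) (hp𝔪mem : ∀ X : 𝔤, p𝔪 X ∈ 𝔪)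
    (hpsum : ∀ X : 𝔤, p𝔨 X + p𝔪 X = X)
    (n : ℕ) (hn : 1 ≤ n) (Z : Fin n → 𝔤)
    (hZmem : ∀ i, Z i ∈ 𝔪)
    (hZon : ∀ i j, NegKilling 𝔤 (Z i) (Z j) = if i = j then 1 else 0)
    (hZspan : Submodule.span ℝ (Set.range Z) = 𝔪)
    (Cas : ℝ)
    (hCas : ∀ X ∈ 𝔪, ∀ Y ∈ 𝔪,
      (∑ i, NegKilling 𝔤 (p𝔨 ⁅X, Z i⁆) (p𝔨 ⁅Y, Z i⁆)) = Cas * NegKilling 𝔤 X Y) :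
    ∀ α : ℝ, ∀ X ∈ 𝔪, ∀ Y ∈ 𝔪,
      RicB 𝔤 p𝔨 p𝔪 α Z X Y = (ScalB 𝔤 p𝔨 p𝔪 α Z / n) * NegKilling 𝔤 X Y := by
  intro α X hX Y hY
  have horth' : ∀ X ∈ 𝔨, ∀ Y ∈ 𝔪, NegKilling 𝔤 X Y = 0 := fun X hX Y hY => by
    rw [NegKilling, horth X hX Y hY, neg_zero]
  obtain ⟨hk, hm⟩ := proj_apply hcompl hp𝔨mem hp𝔪mem hpsum
  have hexp := proj_eq_sum horth' hp𝔨mem hp𝔪mem hpsum hZmem hZon hZspan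
  obtain ⟨r, hr⟩ : ∃ r : ℝ, ∀ X ∈ 𝔪, ∀ Y ∈ 𝔪,
      RicB 𝔤 p𝔨 p𝔪 α Z X Y = r * NegKilling 𝔤 X Y := by
    refine ⟨((1 - α) / 2 - ((1 - α) / 2) ^ 2) * (1 - 2 * Cas) + Cas, fun X hX Y hY => ?_⟩
    have hP := negKilling_eq horth' h𝔨𝔪 hp𝔨mem hp𝔪mem hpsum hk hm hexp X Y hY
    rw [hCas X hX Y hY] at hP
    rw [ricB_eq horth' hp𝔨mem hp𝔪mem hpsum α X Y hY, hCas X hX Y hY]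
    linear_combination -((1 - α) / 2 - ((1 - α) / 2) ^ 2) * hP
  have hscal : ScalB 𝔤 p𝔨 p𝔪 α Z = n * r := by
    simp [ScalB, hr _ (hZmem _) _ (hZmem _), hZon]
  have hn0 : (n : ℝ) ≠ 0 := by positivity
  rw [hr X hX Y hY, hscal, mul_div_cancel_left₀ _ hn0]
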